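/- (Theorem 3.2, one-block estimate) For every jump rate c, every Γ-invariant local function bundle f: V×Z → ℝ, and every constant C > 0, it holds that lim_{i→∞} limsup_{m→∞} sup_{μ ∈ P_{m,C}} E_μ | f̄_{o,i} − ⟨f_o⟩( η̄_{o,i} ) | = 0. -/

import Mathlib

open Filter Pointwise

namespace Tower

variable {Γ : Type} [Group Γ] [DecidableEq Γ]

/-- The ball of radius `n` about the identity in the Cayley graph of `(Γ, S)`, as a `Finset`:
products of at most `n` elements of `S`. -/
def ballF (S : Finset Γ) : ℕ → Finset Γ
  | 0 => {1}
  | n + 1 => ballF S n ∪ ballF S n * S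

lemma one_mem_ballF (S : Finset Γ) (n : ℕ) : (1 : Γ) ∈ ballF S n := by
  induction n with
  | zero => simp [ballF]
  | succ n ih => exact Finset.mem_union_left _ ih

/-- The word norm of `x` with respect to `S`. -/
noncomputable def wordNorm (S : Finset Γ) (x : Γ) : ℕ := sInf {n | x ∈ ballF S n}

/-- `(F i)` is a Følner sequence for `(Γ, S)`. -/
def IsFolner (S : Finset Γ) (F : ℕ → Finset Γ) : Prop :=
  (∀ i, (F i).Nonempty) ∧
    Tendsto (fun i => (((F i * S) \ F i).card : ℝ) / (F i).card) atTop (nhds 0)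

/-- `b(K)`: the largest `i` such that `F i` is contained in the ball of radius `K` about `o`. -/
noncomputable def bFol (S : Finset Γ) (F : ℕ → Finset Γ) (K : ℝ) : ℕ :=
  sSup {i | ∀ x ∈ F i, (wordNorm S x : ℝ) ≤ K}

/-- Exchange the values of a configuration at two coordinates. -/
def exch {α : Type} [DecidableEq α] (x y : α) (η : α → Bool) : α → Bool :=
  fun z => if z = x then η y else if z = y then η x else η z

/-- Exchange of values at two coordinates, on configurations restricted to a `Finset`. -/
def exchOn {α : Type} [DecidableEq α] (A : Finset α) (x y : α)
    (ζ : {a // a ∈ A} → Bool) : {a // a ∈ A} → Bool :=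
  fun z => if (z : α) = x then (if h : y ∈ A then ζ ⟨y, h⟩ else ζ z)
    else if (z : α) = y then (if h : x ∈ A then ζ ⟨x, h⟩ else ζ z) else ζ z

/-- The type of generators. -/
abbrev Gen (S : Finset Γ) : Type _ := {s : Γ // s ∈ S}

/-- A `Γ`-invariant local function bundle for vertices `f : V × Z → ℝ` on the Cayley graph
`X = (V, E)` of `(Γ, S)`, `V = Γ`, `Z = {0,1}^V`. -/
structure LocalBundleV (S : Finset Γ) : Type _ where
  f : Γ → (Γ → Bool) → ℝ
  r : ℕ
  localized : ∀ (x : Γ) (η η' : Γ → Bool),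
    (∀ z ∈ (ballF S r).image (x * ·), η z = η' z) → f x η = f x η'
  invariant : ∀ (σ x : Γ) (η : Γ → Bool), f (σ * x) (fun z => η (σ⁻¹ * z)) = f x η

/-- A jump rate: a symmetric, non-degenerate `Γ`-invariant local function bundle for edges,
an edge being encoded as a pair `(x, s) : Γ × Gen S` with origin `x` and terminus `x * s`. -/
structure JumpRate (S : Finset Γ) : Type _ where
  c : Γ → Gen S → (Γ → Bool) → ℝ
  c₀ : ℝ
  c₀_pos : 0 < c₀
  nondeg : ∀ x s η, c₀ ≤ c x s η
  r : ℕ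
  localized : ∀ (x : Γ) (s : Gen S) (η η' : Γ → Bool),
    (∀ z ∈ (ballF S r).image (x * ·) ∪ (ballF S r).image (x * (s : Γ) * ·), η z = η' z) →
      c x s η = c x s η'
  invariant : ∀ (σ x : Γ) (s : Gen S) (η : Γ → Bool),
    c (σ * x) s (fun z => η (σ⁻¹ * z)) = c x s η
  symm_rev : ∀ (x : Γ) (s : Gen S) (h : (s : Γ)⁻¹ ∈ S) (η : Γ → Bool),
    c (x * (s : Γ)) ⟨(s : Γ)⁻¹, h⟩ η = c x s η
  symm_exch : ∀ (x : Γ) (s : Gen S) (η : Γ → Bool),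
    c x s (exch x (x * (s : Γ)) η) = c x s η

/-- `ρ`-Bernoulli weight on `{0,1}`. -/
def bw (ρ : ℝ) (b : Bool) : ℝ := if b then ρ else 1 - ρ

/-- Expectation with respect to the `ρ`-Bernoulli product measure `ν_ρ` of a cylinder function
depending only on the coordinates in the finite set `A`. -/
noncomputable def expCyl (ρ : ℝ) (A : Finset Γ) (g : (Γ → Bool) → ℝ) : ℝ :=
  ∑ ζ : ({a // a ∈ A} → Bool),
    (∏ a : {a // a ∈ A}, bw ρ (ζ a)) *
      g (fun z => if h : z ∈ A then ζ ⟨z, h⟩ else false)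

/-- The global average `⟨f_o⟩(ρ) = E_{ν_ρ}[f_o]`. -/
noncomputable def globalAvg {S : Finset Γ} (f : LocalBundleV S) (ρ : ℝ) : ℝ :=
  expCyl ρ (ballF S f.r) (f.f 1)

section Quot

variable (N : Subgroup Γ)

/-- The configuration space `Z_m = {0,1}^{V_m}` over the quotient graph `X_m = Γ_m \ X`. -/
abbrev Conf (N : Subgroup Γ) : Type _ := (Γ ⧸ N) → Bool

/-- The `Γ_m`-periodic extension of a configuration on `X_m` to `X`. -/
def liftZ (η : Conf N) : Γ → Bool := fun x => η (QuotientGroup.mk x)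

/-- The function on `V_m × Z_m` induced by a local function bundle. -/
noncomputable def fQ {S : Finset Γ} (f : LocalBundleV S) (v : Γ ⧸ N) (η : Conf N) : ℝ :=
  f.f (Quotient.out v) (liftZ N η)

/-- The jump rate induced on the quotient graph, on the edge `(v, v * s)`. -/
noncomputable def cQ {S : Finset Γ} (c : JumpRate S) (v : Γ ⧸ N) (s : Gen S) (η : Conf N) : ℝ :=
  c.c (Quotient.out v) s (liftZ N η)

variable [N.Normal]

/-- `η^e` on the quotient, for the edge `e = (v, v * s)`. -/
def exchQ [DecidableEq (Γ ⧸ N)] (v : Γ ⧸ N) (s : Γ) (η : Conf N) : Conf N :=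
  exch v (v * QuotientGroup.mk s) η

/-- The graph distance on the quotient graph `X_m`. -/
noncomputable def distQ (S : Finset Γ) (v w : Γ ⧸ N) : ℕ :=
  sInf {n | ∃ x ∈ ballF S n, v * QuotientGroup.mk x = w}

/-- The diameter of the quotient graph `X_m`. -/
noncomputable def diamQ (S : Finset Γ) : ℕ :=
  sSup {k | ∃ v w : Γ ⧸ N, distQ N S v w = k}

variable [Fintype (Γ ⧸ N)] [DecidableEq (Γ ⧸ N)]

/-- `μ` is a probability measure on the finite configuration space `Z_m`. -/
def IsProb (μ : Conf N → ℝ) : Prop := (∀ η, 0 ≤ μ η) ∧ ∑ η, μ η = 1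

/-- The action of `Γ/Γ_m` on `Z_m`. -/
def actQ (σ : Γ ⧸ N) (η : Conf N) : Conf N := fun z => η (σ⁻¹ * z)

/-- `μ` is `Γ/Γ_m`-invariant. -/
def IsInvariant (μ : Conf N → ℝ) : Prop := ∀ σ η, μ (actQ N σ η) = μ η

/-- The uniform ((1/2)-Bernoulli) measure `ν_m` on `Z_m`. -/
noncomputable def nuU : Conf N → ℝ := fun _ => (Fintype.card (Conf N) : ℝ)⁻¹

/-- The density `φ = dμ/dν_m`. -/
noncomputable def dens (μ : Conf N → ℝ) : Conf N → ℝ :=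
  fun η => (Fintype.card (Conf N) : ℝ) * μ η

/-- `√φ` where `φ = dμ/dν_m`. -/
noncomputable def sqrtDens (μ : Conf N → ℝ) : Conf N → ℝ :=
  fun η => Real.sqrt (dens N μ η)

/-- Expectation with respect to a probability measure on `Z_m`. -/
noncomputable def Emeas (μ : Conf N → ℝ) (g : Conf N → ℝ) : ℝ := ∑ η, μ η * g η

/-- The generator `L_m F (η) = Σ_{e ∈ E_m} c(e,η) (F(η^e) - F(η))`. -/
noncomputable def Lgen {S : Finset Γ} (c : JumpRate S) (F : Conf N → ℝ) (η : Conf N) : ℝ :=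
  ∑ e : (Γ ⧸ N) × Gen S, cQ N c e.1 e.2 η * (F (exchQ N e.1 (e.2 : Γ) η) - F η)

/-- The Dirichlet form `I_m(μ) = -∫ √φ L_m √φ dν_m`. -/
noncomputable def ImGen {S : Finset Γ} (c : JumpRate S) (μ : Conf N → ℝ) : ℝ :=
  - ∑ η, nuU N η * (sqrtDens N μ η * Lgen N c (sqrtDens N μ) η)

/-- The Dirichlet form in sum form:
`I_m(μ) = (1/2) Σ_{e ∈ E_m} ∫ c(e,η) (π_e √φ)² dν_m`. -/
noncomputable def ImSum {S : Finset Γ} (c : JumpRate S) (μ : Conf N → ℝ) : ℝ :=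
  (1 / 2) * ∑ e : (Γ ⧸ N) × Gen S, ∑ η, nuU N η *
    (cQ N c e.1 e.2 η * (sqrtDens N μ (exchQ N e.1 (e.2 : Γ) η) - sqrtDens N μ η) ^ 2)

/-- The local average `f̄_{v,i}` on the quotient, over the Følner set `Fi`. -/
noncomputable def fbarQ {S : Finset Γ} (f : LocalBundleV S) (Fi : Finset Γ) (v : Γ ⧸ N)
    (η : Conf N) : ℝ :=
  ((Fi.card : ℝ))⁻¹ * ∑ σ ∈ Fi, fQ N f (QuotientGroup.mk σ * v) η

/-- The local particle density `η̄_{v,i}` on the quotient, over the Følner set `Fi`. -/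
noncomputable def etabarQ (Fi : Finset Γ) (v : Γ ⧸ N) (η : Conf N) : ℝ :=
  ((Fi.card : ℝ))⁻¹ * ∑ σ ∈ Fi, (if η (QuotientGroup.mk σ * v) then (1 : ℝ) else 0)

/-- The image of `E⁰ = {e ∈ E : oe = o or te = o}` in `E_m`. -/
def E0Q (S : Finset Γ) : Finset ((Γ ⧸ N) × Gen S) :=
  Finset.univ.filter fun e => e.1 = 1 ∨ e.1 * QuotientGroup.mk (e.2 : Γ) = 1

/-- The marginal `μ|_Λ` on `Z_Λ = {0,1}^A` of a measure on `Z_m` (identified with its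
`Γ_m`-periodic extension). -/
noncomputable def marg (A : Finset Γ) (μ : Conf N → ℝ) (ζ : {a // a ∈ A} → Bool) : ℝ :=
  ∑ η : Conf N, if (∀ a : {a // a ∈ A}, liftZ N η (a : Γ) = ζ a) then μ η else 0

/-- The density `φ_Λ = d(μ|_Λ)/dν_Λ`. -/
noncomputable def margDens (A : Finset Γ) (μ : Conf N → ℝ) (ζ : {a // a ∈ A} → Bool) : ℝ :=
  (Fintype.card ({a // a ∈ A} → Bool) : ℝ) * marg N A μ ζ

/-- The restricted Dirichlet form
`I°_Λ(μ) = (1/2) Σ_{e ∈ E_Λ} ∫_{Z_Λ} (π_e √φ_Λ)² dν_Λ` for the subgraph `Λ = (A, Eset)`. -/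
noncomputable def IrestV {S : Finset Γ} (A : Finset Γ) (Eset : Finset (Γ × Gen S))
    (μ : Conf N → ℝ) : ℝ :=
  (1 / 2) * ∑ e ∈ Eset, ∑ ζ : ({a // a ∈ A} → Bool),
    (Fintype.card ({a // a ∈ A} → Bool) : ℝ)⁻¹ *
      (Real.sqrt (margDens N A μ (exchOn A e.1 (e.1 * (e.2 : Γ)) ζ)) -
        Real.sqrt (margDens N A μ ζ)) ^ 2

/-- The marginal on `Z_Λ × Z_Λ` of the pushforward `σ̂μ` of `μ` under `η ↦ (η, σ⁻¹η)`. -/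
noncomputable def margTwo (σ : Γ) (A : Finset Γ) (μ : Conf N → ℝ)
    (ζ ζ' : {a // a ∈ A} → Bool) : ℝ :=
  ∑ η : Conf N,
    if ((∀ a : {a // a ∈ A}, liftZ N η (a : Γ) = ζ a) ∧
        (∀ a : {a // a ∈ A}, liftZ N η (σ * (a : Γ)) = ζ' a)) then μ η else 0

/-- The density of `(σ̂μ)|_{Λ×Λ}` with respect to `ν_Λ ⊗ ν_Λ`. -/
noncomputable def margTwoDens (σ : Γ) (A : Finset Γ) (μ : Conf N → ℝ)
    (ζ ζ' : {a // a ∈ A} → Bool) : ℝ :=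
  ((Fintype.card ({a // a ∈ A} → Bool) : ℝ)) ^ 2 * margTwo N σ A μ ζ ζ'

/-- `I^{(o,o)}_{Λ×Λ}(σ̂μ) = (1/2) ∫ (π̃_{o,o} √(d(σ̂μ)|_{Λ×Λ}/d(ν_Λ⊗ν_Λ)))² d(ν_Λ⊗ν_Λ)`. -/
noncomputable def Ioo (σ : Γ) (A : Finset Γ) (h1 : (1 : Γ) ∈ A) (μ : Conf N → ℝ) : ℝ :=
  (1 / 2) * ∑ ζ : ({a // a ∈ A} → Bool), ∑ ζ' : ({a // a ∈ A} → Bool),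
    (((Fintype.card ({a // a ∈ A} → Bool) : ℝ)) ^ 2)⁻¹ *
      (Real.sqrt (margTwoDens N σ A μ (Function.update ζ ⟨1, h1⟩ (ζ' ⟨1, h1⟩))
          (Function.update ζ' ⟨1, h1⟩ (ζ ⟨1, h1⟩))) -
        Real.sqrt (margTwoDens N σ A μ ζ ζ')) ^ 2

/-- The two-block restricted Dirichlet form `I°_{Λ×Λ}(σ̂μ)`, i.e. the Dirichlet form of
`L°_Λ ⊗ 1 + 1 ⊗ L°_Λ` of the square root of the density of `(σ̂μ)|_{Λ×Λ}`. -/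
noncomputable def ItwoRest {S : Finset Γ} (σ : Γ) (A : Finset Γ) (Eset : Finset (Γ × Gen S))
    (μ : Conf N → ℝ) : ℝ :=
  (1 / 2) * ∑ e ∈ Eset, ∑ ζ : ({a // a ∈ A} → Bool), ∑ ζ' : ({a // a ∈ A} → Bool),
    (((Fintype.card ({a // a ∈ A} → Bool) : ℝ)) ^ 2)⁻¹ *
      ((Real.sqrt (margTwoDens N σ A μ (exchOn A e.1 (e.1 * (e.2 : Γ)) ζ) ζ') -
          Real.sqrt (margTwoDens N σ A μ ζ ζ')) ^ 2 +
        (Real.sqrt (margTwoDens N σ A μ ζ (exchOn A e.1 (e.1 * (e.2 : Γ)) ζ')) -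
          Real.sqrt (margTwoDens N σ A μ ζ ζ')) ^ 2)

end Quot

/-- The edge set `E_Λ` of the subgraph `Λ` spanned by the ball of radius `K`. -/
def ELam (S : Finset Γ) (K : ℕ) : Finset (Γ × Gen S) :=
  (ballF S K ×ˢ (Finset.univ : Finset (Gen S))).filter fun e => e.1 * (e.2 : Γ) ∈ ballF S K

open scoped BigOperators

/-! By invariance of `μ`, all edges in the direction of one generator carry the same share of the
Dirichlet form, so a bound `I_m(μ) ≤ C [Γ : Γ_m] / t_m` forces each single edge to carry `O(1/t_m)`.
By Cauchy–Schwarz, exchanging the values at the two ends of a fixed edge then changes `μ` by `o(1)`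
in total variation. Exchanges along edges generate all finite permutations of the sites, hence the
probability of a pattern at finitely many distinct sites asymptotically depends only on the pattern.

The difference `f̄_{o,i} - ⟨f_o⟩(η̄_{o,i})` is a finite combination of terms comparing the frequency
of a pattern among translates by `F_i` with its Bernoulli probability at density `η̄_{o,i}`. Each
such term is the average, over independent uniform choices of a translation and of one site per
coordinate from `F_i`, of a difference of two pattern indicators. Its second moment is an average
over pairs of choices: a pair involving no coincidence of sites contributes `o(1)` by asymptotic
exchangeability, and all other pairs have proportion `O(1/|F_i|)`. -/

lemma sum_mul_comp_sub_sq {Z R : Type*} [Fintype Z] [CommRing R] {T : Z → Z}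
    (hT : Function.Involutive T) {c : Z → R} (hc : ∀ z, c (T z) = c z) (ψ : Z → R) :
    ∑ z, c z * (ψ (T z) - ψ z) ^ 2 = -2 * ∑ z, ψ z * (c z * (ψ (T z) - ψ z)) := by
  have reindex : ∑ z, ψ z * (c z * (ψ (T z) - ψ z)) = ∑ z, ψ (T z) * (c z * (ψ z - ψ (T z))) := by
    rw [← Equiv.sum_comp hT.toPerm]
    simp [hT _, hc]
  calc ∑ z, c z * (ψ (T z) - ψ z) ^ 2
      = -(∑ z, ψ z * (c z * (ψ (T z) - ψ z)) + ∑ z, ψ (T z) * (c z * (ψ z - ψ (T z)))) := by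
        rw [← Finset.sum_add_distrib, ← Finset.sum_neg_distrib]
        exact Finset.sum_congr rfl fun z _ => by ring
    _ = -2 * ∑ z, ψ z * (c z * (ψ (T z) - ψ z)) := by rw [← reindex]; ring

lemma sq_sum_abs_sub_le_sum_sqrt_sub_sq {ι : Type*} (s : Finset ι) {p q : ι → ℝ}
    (hp : ∀ i ∈ s, 0 ≤ p i) (hq : ∀ i ∈ s, 0 ≤ q i) :
    (∑ i ∈ s, |p i - q i|) ^ 2
      ≤ (2 * (∑ i ∈ s, p i + ∑ i ∈ s, q i)) * ∑ i ∈ s, (√(p i) - √(q i)) ^ 2 := by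
  have abs_sub_sq_le : ∀ i ∈ s, |p i - q i| ^ 2 ≤ (2 * (p i + q i)) * (√(p i) - √(q i)) ^ 2 := by
    intro i hi
    have hsub : p i - q i = (√(p i) + √(q i)) * (√(p i) - √(q i)) := by
      rw [← sq_sub_sq, Real.sq_sqrt (hp i hi), Real.sq_sqrt (hq i hi)]
    have hadd : (√(p i) + √(q i)) ^ 2 ≤ 2 * (p i + q i) := by
      simpa only [Real.sq_sqrt (hp i hi), Real.sq_sqrt (hq i hi)] using
        add_sq_le (a := √(p i)) (b := √(q i))
    rw [sq_abs, hsub, mul_pow]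
    gcongr
  rw [← Finset.sum_add_distrib, Finset.mul_sum s _ 2]
  exact Finset.sum_sq_le_sum_mul_sum_of_sq_le_mul s
    (fun i hi => mul_nonneg two_pos.le (add_nonneg (hp i hi) (hq i hi)))
    (fun i _ => sq_nonneg _) abs_sub_sq_le

section DirichletForm

variable {G : Type} [Group G] (N : Subgroup G) [N.Normal] [DecidableEq (G ⧸ N)]

lemma exch_eq_comp_swap {α : Type} [DecidableEq α] (x y : α) (η : α → Bool) :
    exch x y η = η ∘ Equiv.swap x y := by
  funext z
  simp only [exch, Function.comp_apply, Equiv.swap_apply_def]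
  split_ifs <;> rfl

lemma exchQ_involutive (v : G ⧸ N) (s : G) : Function.Involutive (exchQ N v s) := fun η => by
  simp [exchQ, exch_eq_comp_swap, Function.comp_assoc, ← Equiv.coe_trans]

lemma exchQ_actQ (v σ : G ⧸ N) (s : G) (η : Conf N) :
    exchQ N (σ * v) s (actQ N σ η) = actQ N σ (exchQ N v s η) := by
  funext z
  simp only [exchQ, exch, actQ, mul_assoc, inv_mul_cancel_left, inv_mul_eq_iff_eq_mul]

lemma actQ_bijective (H : Subgroup G) [H.Normal] (σ : G ⧸ H) : Function.Bijective (actQ H σ) :=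
  Function.bijective_iff_has_inverse.mpr ⟨actQ H σ⁻¹, fun η => by funext; simp [actQ],
    fun η => by funext; simp [actQ]⟩

variable [Fintype (G ⧸ N)]

/-- The unweighted Dirichlet form of `√μ` along the single edge `(v, v * s)` of the quotient. -/
noncomputable def edgeForm (μ : Conf N → ℝ) (v : G ⧸ N) (s : G) : ℝ :=
  ∑ η, (√(μ (exchQ N v s η)) - √(μ η)) ^ 2

lemma edgeForm_nonneg (μ : Conf N → ℝ) (v : G ⧸ N) (s : G) : 0 ≤ edgeForm N μ v s :=
  Finset.sum_nonneg fun _ _ => sq_nonneg _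

lemma IsInvariant.edgeForm_eq {μ : Conf N → ℝ} (hμ : IsInvariant N μ) (v w : G ⧸ N) (s : G) :
    edgeForm N μ v s = edgeForm N μ w s := by
  have h := fun η => exchQ_actQ N w (v * w⁻¹) s η
  simp only [inv_mul_cancel_right] at h
  rw [edgeForm, ← (actQ_bijective N (v * w⁻¹)).sum_comp]
  simp only [h, hμ _ _, edgeForm]

lemma IsProb.sq_sum_abs_exchQ_sub_le {μ : Conf N → ℝ} (hμ : IsProb N μ) (v : G ⧸ N) (s : G) :
    (∑ η, |μ (exchQ N v s η) - μ η|) ^ 2 ≤ 4 * edgeForm N μ v s := by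
  have hsum : ∑ η, μ (exchQ N v s η) = 1 :=
    ((exchQ_involutive N v s).bijective.sum_comp μ).trans hμ.2
  have h := sq_sum_abs_sub_le_sum_sqrt_sub_sq Finset.univ
    (fun η _ => hμ.1 (exchQ N v s η)) (fun η _ => hμ.1 η)
  rw [hsum, hμ.2] at h
  exact h.trans_eq (by rw [edgeForm]; ring)

lemma abs_Emeas_comp_exchQ_sub_le (μ : Conf N → ℝ) (v : G ⧸ N) (s : G) {g : Conf N → ℝ}
    (hg : ∀ η, |g η| ≤ 1) :
    |Emeas N μ (g ∘ exchQ N v s) - Emeas N μ g| ≤ ∑ η, |μ (exchQ N v s η) - μ η| := by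
  have reindex : Emeas N μ (g ∘ exchQ N v s) = ∑ η, μ (exchQ N v s η) * g η := by
    rw [Emeas, ← (exchQ_involutive N v s).bijective.sum_comp]
    simp [exchQ_involutive N v s _]
  rw [reindex, Emeas, ← Finset.sum_sub_distrib]
  refine (Finset.abs_sum_le_sum_abs _ _).trans (Finset.sum_le_sum fun η _ => ?_)
  rw [← sub_mul, abs_mul]
  exact mul_le_of_le_one_right (abs_nonneg _) (hg η)

lemma nuU_mul_sqrtDens_sub_sq (H : Subgroup G) [Fintype (G ⧸ H)] [DecidableEq (G ⧸ H)]
    (μ : Conf H → ℝ) (η η' : Conf H) :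
    nuU H η * (sqrtDens H μ η' - sqrtDens H μ η) ^ 2 = (√(μ η') - √(μ η)) ^ 2 := by
  have hcard : (0 : ℝ) < Fintype.card (Conf H) := by exact_mod_cast Fintype.card_pos
  simp only [sqrtDens, dens, nuU, Real.sqrt_mul hcard.le, ← mul_sub, mul_pow,
    Real.sq_sqrt hcard.le, inv_mul_cancel_left₀ hcard.ne']

end DirichletForm

section Generator

variable {S : Finset Γ} (N : Subgroup Γ) [N.Normal] [Fintype (Γ ⧸ N)] [DecidableEq (Γ ⧸ N)]
  {c : JumpRate S}

lemma ImGen_eq_ImSum (hc : ∀ v s η, cQ N c v s (exchQ N v s η) = cQ N c v s η)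
    (μ : Conf N → ℝ) : ImGen N c μ = ImSum N c μ := by
  let ψ := sqrtDens N μ
  have byParts : ∀ e : (Γ ⧸ N) × Gen S,
      ∑ η, nuU N η * (cQ N c e.1 e.2 η * (ψ (exchQ N e.1 e.2 η) - ψ η) ^ 2) =
        -2 * ∑ η, ψ η * (nuU N η * cQ N c e.1 e.2 η * (ψ (exchQ N e.1 e.2 η) - ψ η)) := by
    intro e
    simp only [← mul_assoc (nuU N _)]
    exact sum_mul_comp_sub_sq (exchQ_involutive N e.1 e.2)
      (fun η => by rw [hc, nuU, nuU]) ψ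
  rw [ImSum, Finset.sum_congr rfl fun e _ => byParts e, ← Finset.mul_sum, Finset.sum_comm,
    ← mul_assoc, ImGen, show (1 / 2 : ℝ) * -2 = -1 by norm_num, neg_one_mul, neg_inj]
  refine Finset.sum_congr rfl fun η _ => ?_
  rw [Lgen, Finset.mul_sum, Finset.mul_sum]
  exact Finset.sum_congr rfl fun e _ => by simp only [ψ]; ring

lemma IsInvariant.mul_edgeForm_le_ImSum {μ : Conf N → ℝ} (hμ : IsInvariant N μ) (v : Γ ⧸ N)
    (s : Gen S) : c.c₀ / 2 * (N.index * edgeForm N μ v s) ≤ ImSum N c μ := by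
  have hcard : (N.index : ℝ) * edgeForm N μ v s = ∑ w, edgeForm N μ w s := by
    simp [hμ.edgeForm_eq N _ v s, Subgroup.index_eq_card, Nat.card_eq_fintype_card]
  calc c.c₀ / 2 * (N.index * edgeForm N μ v s)
      = 1 / 2 * ∑ w, c.c₀ * edgeForm N μ w s := by rw [hcard, ← Finset.mul_sum]; ring
    _ ≤ 1 / 2 * ∑ w, ∑ s' : Gen S, c.c₀ * edgeForm N μ w s' := by
        gcongr with w
        exact Finset.single_le_sum (f := fun s' : Gen S => c.c₀ * edgeForm N μ w s')
          (fun s' _ => mul_nonneg c.c₀_pos.le (edgeForm_nonneg N μ w s')) (Finset.mem_univ s)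
    _ ≤ ImSum N c μ := by
        rw [ImSum, Fintype.sum_prod_type]
        gcongr with w _ s'
        rw [edgeForm, Finset.mul_sum]
        refine Finset.sum_le_sum fun η _ => ?_
        rw [mul_left_comm, nuU_mul_sqrtDens_sub_sq]
        gcongr
        exact c.nondeg _ _ _

end Generator

section LocalInjectivity

variable {G κ : Type*} [Group G] {l : Filter κ} {N : κ → Subgroup G}

lemma eventually_injOn_mk (hsep : ∀ x ≠ 1, ∀ᶠ k in l, x ∉ N k) (T : Finset G) :
    ∀ᶠ k in l, Set.InjOn (QuotientGroup.mk : G → G ⧸ N k) T := by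
  have hpairs : ∀ᶠ k in l, ∀ x ∈ T, ∀ y ∈ T, x⁻¹ * y ∈ N k → x = y := by
    simp only [eventually_all_finset]
    intro x _ y _
    by_cases hxy : x = y
    · exact .of_forall fun _ _ => hxy
    · filter_upwards [hsep (x⁻¹ * y) (by rwa [ne_eq, inv_mul_eq_one])] with k hk h
      exact absurd h hk
  filter_upwards [hpairs] with k hk x hx y hy hxy
  exact hk x hx y hy (QuotientGroup.eq.mp hxy)

lemma injOn_mk_image_mul_left {H : Subgroup G} {U : Set G}
    (hU : Set.InjOn (QuotientGroup.mk : G → G ⧸ H) U) (x : G) :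
    Set.InjOn (QuotientGroup.mk : G → G ⧸ H) ((x * ·) '' U) := by
  rintro _ ⟨a, ha, rfl⟩ _ ⟨b, hb, rfl⟩ hab
  rw [hU ha hb (QuotientGroup.eq.mpr (by simpa [mul_assoc] using QuotientGroup.eq.mp hab))]

end LocalInjectivity

lemma liftZ_exchQ (N : Subgroup Γ) [N.Normal] [DecidableEq (Γ ⧸ N)] {U : Set Γ}
    (hU : Set.InjOn (QuotientGroup.mk : Γ → Γ ⧸ N) U) {a s : Γ} (ha : a ∈ U) (has : a * s ∈ U)
    (η : Conf N) :
    Set.EqOn (liftZ N (exchQ N (QuotientGroup.mk a) s η)) (exch a (a * s) (liftZ N η)) U := by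
  intro z hz
  simp only [liftZ, exchQ, exch, ← QuotientGroup.mk_mul, hU.eq_iff hz ha, hU.eq_iff hz has]

lemma cQ_exchQ {S : Finset Γ} (c : JumpRate S) (N : Subgroup Γ) [N.Normal]
    [DecidableEq (Γ ⧸ N)] {s : Gen S}
    (hN : Set.InjOn (QuotientGroup.mk : Γ → Γ ⧸ N)
      (ballF S c.r ∪ (ballF S c.r).image (s.1 * ·) : Finset Γ)) (v : Γ ⧸ N) (η : Conf N) :
    cQ N c v s (exchQ N v s η) = cQ N c v s η := by
  set x := v.out
  have hv : v = QuotientGroup.mk x := (QuotientGroup.out_eq' v).symm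
  have mem_nhd : ∀ y ∈ ballF S c.r ∪ (ballF S c.r).image (s.1 * ·), x * y ∈ (x * ·) ''
      (ballF S c.r ∪ (ballF S c.r).image (s.1 * ·) : Finset Γ) :=
    fun y hy => Set.mem_image_of_mem (x * ·) hy
  rw [cQ, cQ, ← c.symm_exch x s (liftZ N η)]
  refine c.localized _ _ _ _ fun z hz => ?_
  nth_rewrite 1 [hv]
  refine liftZ_exchQ N (injOn_mk_image_mul_left hN x) ?_ ?_ η ?_
  · simpa using mem_nhd 1 (Finset.mem_union_left _ (one_mem_ballF S c.r))
  · exact mem_nhd s (Finset.mem_union_right _ (Finset.mem_image.mpr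
      ⟨1, one_mem_ballF S c.r, mul_one _⟩))
  · rcases Finset.mem_union.mp hz with h | h <;> obtain ⟨w, hw, rfl⟩ := Finset.mem_image.mp h
    · exact mem_nhd w (Finset.mem_union_left _ hw)
    · rw [mul_assoc]
      exact mem_nhd _ (Finset.mem_union_right _ (Finset.mem_image_of_mem _ hw))

section Exchangeability

variable {κ : Type*} {l : Filter κ}

section TotalVariation

variable {N : κ → Subgroup Γ} [∀ k, (N k).Normal] [∀ k, Fintype (Γ ⧸ N k)]
  [∀ k, DecidableEq (Γ ⧸ N k)] {μ : ∀ k, Conf (N k) → ℝ} {S : Finset Γ} {c : JumpRate S}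
  {δ : κ → ℝ}

lemma eventually_edgeForm_le (hsep : ∀ x ≠ 1, ∀ᶠ k in l, x ∉ N k)
    (hinv : ∀ k, IsInvariant (N k) (μ k)) (hI : ∀ k, ImGen (N k) c (μ k) ≤ δ k * (N k).index) :
    ∀ᶠ k in l, ∀ v (s : Gen S), edgeForm (N k) (μ k) v s ≤ 2 * δ k / c.c₀ := by
  have hinj := fun s : Gen S =>
    eventually_injOn_mk hsep (ballF S c.r ∪ (ballF S c.r).image (s.1 * ·))
  filter_upwards [eventually_all.mpr hinj] with k hk v s
  have hindex : (0 : ℝ) < (N k).index := by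
    exact_mod_cast Nat.pos_of_ne_zero Subgroup.index_ne_zero_of_finite
  have hle : (N k).index * (c.c₀ / 2 * edgeForm (N k) (μ k) v s) ≤ (N k).index * δ k := by
    calc (N k).index * (c.c₀ / 2 * edgeForm (N k) (μ k) v s)
        = c.c₀ / 2 * ((N k).index * edgeForm (N k) (μ k) v s) := by ring
      _ ≤ ImSum (N k) c (μ k) := (hinv k).mul_edgeForm_le_ImSum (N k) v s
      _ = ImGen (N k) c (μ k) :=
          (ImGen_eq_ImSum (N k) (fun v s => cQ_exchQ c (N k) (hk s) v) (μ k)).symm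
      _ ≤ (N k).index * δ k := (hI k).trans_eq (mul_comm _ _)
  rw [le_div_iff₀ c.c₀_pos]
  linarith [le_of_mul_le_mul_left hle hindex]

lemma tendsto_sum_abs_exchQ_sub (hsep : ∀ x ≠ 1, ∀ᶠ k in l, x ∉ N k)
    (hμ : ∀ k, IsProb (N k) (μ k)) (hinv : ∀ k, IsInvariant (N k) (μ k))
    (hδ : Tendsto δ l (nhds 0)) (hI : ∀ k, ImGen (N k) c (μ k) ≤ δ k * (N k).index)
    (a : Γ) (s : Gen S) :
    Tendsto (fun k => ∑ η, |μ k (exchQ (N k) (QuotientGroup.mk a) s η) - μ k η|) l (nhds 0) := by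
  have hlim : Tendsto (fun k => √(4 * (2 * δ k / c.c₀))) l (nhds 0) := by
    simpa using (((hδ.const_mul 2).div_const c.c₀).const_mul 4).sqrt
  refine squeeze_zero' (.of_forall fun k => Finset.sum_nonneg fun _ _ => abs_nonneg _) ?_ hlim
  filter_upwards [eventually_edgeForm_le hsep hinv hI] with k hk
  refine Real.le_sqrt_of_sq_le (((hμ k).sq_sum_abs_exchQ_sub_le _ _ _).trans ?_)
  gcongr
  exact hk _ s

end TotalVariation

/-- The indicator of the cylinder event that the configuration shows the pattern `ζ` at the
sites `p`. -/
def cylInd {G J : Type*} [Fintype J] (p : J → G) (ζ : J → Bool) (ξ : G → Bool) : ℝ :=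
  if ξ ∘ p = ζ then 1 else 0

lemma cylInd_eq_prod {G J : Type*} [Fintype J] (p : J → G) (ζ : J → Bool) (ξ : G → Bool) :
    cylInd p ζ ξ = ∏ j, if ξ (p j) = ζ j then 1 else 0 := by
  simp [cylInd, Finset.prod_boole, funext_iff]

lemma cylInd_nonneg {G J : Type*} [Fintype J] (p : J → G) (ζ : J → Bool) (ξ : G → Bool) :
    0 ≤ cylInd p ζ ξ := by
  unfold cylInd; positivity

lemma cylInd_le_one {G J : Type*} [Fintype J] (p : J → G) (ζ : J → Bool) (ξ : G → Bool) :
    cylInd p ζ ξ ≤ 1 := by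
  unfold cylInd; split_ifs <;> norm_num

lemma cylInd_sumElim {G J J' : Type*} [Fintype J] [Fintype J'] (p : J → G) (q : J' → G)
    (ζ : J → Bool) (ζ' : J' → Bool) (ξ : G → Bool) :
    cylInd (Sum.elim p q) (Sum.elim ζ ζ') ξ = cylInd p ζ ξ * cylInd q ζ' ξ := by
  rw [cylInd_eq_prod, cylInd_eq_prod, cylInd_eq_prod, Fintype.prod_sum_type]
  rfl

variable {G : Type} [Group G]

/-- The probability that the periodic extension of a `μ`-random configuration shows the
pattern `ζ` at the sites `p`. -/
noncomputable def cylProb (N : Subgroup G) [Fintype (G ⧸ N)] [DecidableEq (G ⧸ N)]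
    {J : Type*} [Fintype J] (μ : Conf N → ℝ) (p : J → G) (ζ : J → Bool) : ℝ :=
  Emeas N μ fun η => cylInd p ζ (liftZ N η)

/-- The permutations of sites that preserve, in the limit along `l`, the probabilities of all
cylinder events on `J`-indexed families of sites. -/
def asympSymmetries (l : Filter κ) (N : κ → Subgroup G) [∀ k, Fintype (G ⧸ N k)]
    [∀ k, DecidableEq (G ⧸ N k)] (μ : ∀ k, Conf (N k) → ℝ) (J : Type) [Fintype J] :
    Subgroup (Equiv.Perm G) where
  carrier := {π | ∀ (p : J → G) (ζ : J → Bool), Tendsto (fun k =>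
    cylProb (N k) (μ k) (π ∘ p) ζ - cylProb (N k) (μ k) p ζ) l (nhds 0)}
  one_mem' p ζ := by simp [tendsto_const_nhds]
  mul_mem' {π τ} hπ hτ p ζ := by
    simpa [Function.comp_assoc] using (hπ (τ ∘ p) ζ).add (hτ p ζ)
  inv_mem' {π} hπ p ζ := by
    have h := (hπ (⇑π⁻¹ ∘ p) ζ).neg
    rw [← Function.comp_assoc, ← Equiv.Perm.coe_mul, mul_inv_cancel] at h
    simpa using h

/-- Asymptotic exchangeability of the measures `μ k` along `l`: in the limit, the probability of
a pattern at finitely many distinct sites does not depend on the sites. -/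
def IsAsympExchangeable (l : Filter κ) (N : κ → Subgroup G) [∀ k, Fintype (G ⧸ N k)]
    [∀ k, DecidableEq (G ⧸ N k)] (μ : ∀ k, Conf (N k) → ℝ) : Prop :=
  ∀ ⦃J : Type⦄ [Fintype J] ⦃p q : J → G⦄, p.Injective → q.Injective → ∀ ζ : J → Bool,
    Tendsto (fun k => cylProb (N k) (μ k) p ζ - cylProb (N k) (μ k) q ζ) l (nhds 0)

lemma swap_mem_of_closure_eq_top [DecidableEq G] {S : Set G} (hS : Subgroup.closure S = ⊤)
    {K : Subgroup (Equiv.Perm G)} (hK : ∀ a, ∀ s ∈ S, Equiv.swap a (a * s) ∈ K) (x y : G) :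
    Equiv.swap x y ∈ K := by
  have swap_mul_mem : ∀ g ∈ Subgroup.closure S, ∀ a, Equiv.swap a (a * g) ∈ K := by
    intro g hg
    induction hg using Subgroup.closure_induction_right with
    | one => exact fun a => by rw [mul_one, Equiv.swap_self]; exact K.one_mem
    | mul_right g _ s hs ih =>
      intro a
      rw [← mul_assoc]
      exact SubmonoidClass.swap_mem_trans K (ih a) (hK (a * g) s hs)
    | mul_inv_cancel g _ s hs ih =>
      intro a
      have h := hK (a * (g * s⁻¹)) s hs
      rw [mul_assoc a, inv_mul_cancel_right, Equiv.swap_comm] at h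
      exact SubmonoidClass.swap_mem_trans K (ih a) h
  simpa using swap_mul_mem (x⁻¹ * y) (hS ▸ Subgroup.mem_top _) x

lemma exists_mem_comp_eq_of_swap_mem {α J : Type*} [Finite J] [DecidableEq α]
    {K : Subgroup (Equiv.Perm α)} (hK : ∀ x y, Equiv.swap x y ∈ K) {p q : J → α}
    (hp : p.Injective) (hq : q.Injective) : ∃ π ∈ K, π ∘ p = q := by
  classical
  have partial_match : ∀ s : Finset J, ∃ π ∈ K, ∀ j ∈ s, π (p j) = q j := by
    intro s
    induction s using Finset.induction_on with
    | empty => exact ⟨1, K.one_mem, by simp⟩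
    | insert i s hi ih =>
      obtain ⟨π, hπ, h⟩ := ih
      refine ⟨Equiv.swap (π (p i)) (q i) * π, K.mul_mem (hK _ _) hπ, fun j hj => ?_⟩
      obtain rfl | hj := Finset.mem_insert.mp hj
      · simp
      · have hji : j ≠ i := fun hji => hi (hji ▸ hj)
        rw [Equiv.Perm.mul_apply, h j hj, Equiv.swap_apply_of_ne_of_ne _ (hq.ne hji)]
        rw [← h j hj]
        exact π.injective.ne (hp.ne hji)
  have := Fintype.ofFinite J
  obtain ⟨π, hπ, h⟩ := partial_match Finset.univ
  exact ⟨π, hπ, funext fun j => h j (Finset.mem_univ j)⟩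

section SwapSymmetry

variable {N : κ → Subgroup Γ} [∀ k, (N k).Normal] [∀ k, Fintype (Γ ⧸ N k)]
  [∀ k, DecidableEq (Γ ⧸ N k)] {μ : ∀ k, Conf (N k) → ℝ}

lemma swap_mem_asympSymmetries (hsep : ∀ x ≠ 1, ∀ᶠ k in l, x ∉ N k) {a s : Γ}
    (hTV : Tendsto (fun k => ∑ η, |μ k (exchQ (N k) (QuotientGroup.mk a) s η) - μ k η|) l
      (nhds 0)) (J : Type) [Fintype J] :
    Equiv.swap a (a * s) ∈ asympSymmetries l N μ J := by
  intro p ζ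
  refine squeeze_zero_norm' ?_ hTV
  filter_upwards [eventually_injOn_mk hsep (insert a (insert (a * s) (Finset.univ.image p)))]
    with k hk
  have hcyl : (fun η => cylInd (Equiv.swap a (a * s) ∘ p) ζ (liftZ (N k) η)) =
      (fun η => cylInd p ζ (liftZ (N k) η)) ∘ exchQ (N k) (QuotientGroup.mk a) s := by
    funext η
    have hsites : liftZ (N k) (exchQ (N k) (QuotientGroup.mk a) s η) ∘ p =
        liftZ (N k) η ∘ Equiv.swap a (a * s) ∘ p := by
      funext j
      have h := liftZ_exchQ (N k) hk (a := a) (s := s) (by simp) (by simp) η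
        (by simp : p j ∈ _)
      rwa [exch_eq_comp_swap] at h
    simp only [cylInd, Function.comp_apply, hsites]
  rw [Real.norm_eq_abs, cylProb, cylProb, hcyl]
  refine abs_Emeas_comp_exchQ_sub_le _ _ _ _ fun η => ?_
  rw [abs_of_nonneg (cylInd_nonneg _ _ _)]
  exact cylInd_le_one _ _ _

end SwapSymmetry

lemma isAsympExchangeable_of_tendsto {N : κ → Subgroup G} [∀ k, (N k).Normal]
    [∀ k, Fintype (G ⧸ N k)] [∀ k, DecidableEq (G ⧸ N k)] {μ : ∀ k, Conf (N k) → ℝ}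
    {S : Set G} (hS : Subgroup.closure S = ⊤)
    (hsep : ∀ x ≠ 1, ∀ᶠ k in l, x ∉ N k)
    (hTV : ∀ a, ∀ s ∈ S, Tendsto (fun k =>
      ∑ η, |μ k (exchQ (N k) (QuotientGroup.mk a) s η) - μ k η|) l (nhds 0)) :
    IsAsympExchangeable l N μ := by
  classical
  intro J _ p q hp hq ζ
  have hswap := swap_mem_of_closure_eq_top hS
    fun a s hs => swap_mem_asympSymmetries hsep (hTV a s hs) J
  obtain ⟨π, hπ, rfl⟩ := exists_mem_comp_eq_of_swap_mem hswap hq hp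
  exact hπ q ζ

end Exchangeability

section Sampling

lemma expect_piFinset_prod {J α K : Type*} [Fintype J] [DecidableEq J] [Field K] [CharZero K]
    (F : J → Finset α) (h : J → α → K) :
    𝔼 ω ∈ Fintype.piFinset F, ∏ j, h j (ω j) = ∏ j, 𝔼 x ∈ F j, h j x := by
  simp only [Finset.expect_eq_sum_div_card, Finset.prod_div_distrib, Finset.prod_univ_sum,
    Fintype.card_piFinset, Nat.cast_prod]

lemma card_filter_apply_eq_mul_card_le {J α β : Type*} [Fintype J] [DecidableEq J]
    [DecidableEq β] (F : Finset α) (j : J) {φ : α → β} (hφ : φ.Injective) {ψ : (J → α) → β}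
    (hψ : ∀ ω x, ψ (Function.update ω j x) = ψ ω) :
    ((Fintype.piFinset fun _ => F).filter fun ω => φ (ω j) = ψ ω).card * F.card
      ≤ (Fintype.piFinset fun _ : J => F).card := by
  rw [← Finset.card_product]
  refine Finset.card_le_card_of_injOn (fun y => Function.update y.1 j y.2) ?_ ?_
  · rintro ⟨ω, x⟩ hy
    simp only [Finset.coe_product, Set.mem_prod, Finset.mem_coe, Finset.mem_filter,
      Fintype.mem_piFinset] at hy
    refine Finset.mem_coe.mpr (Fintype.mem_piFinset.mpr fun i => ?_)
    obtain rfl | hij := eq_or_ne i j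
    · simpa using hy.2
    · simpa [hij] using hy.1.1 i
  · rintro ⟨ω, x⟩ hω ⟨ω', x'⟩ hω' heq
    simp only [Finset.coe_product, Set.mem_prod, Finset.mem_coe, Finset.mem_filter] at hω hω' heq
    have hx : x = x' := by simpa using congrFun heq j
    have hωj : ω j = ω' j := hφ <| by rw [hω.1.2, hω'.1.2, ← hψ ω x, ← hψ ω' x', heq]
    refine Prod.ext (funext fun i => ?_) hx
    obtain rfl | hij := eq_or_ne i j
    · exact hωj
    · simpa [hij] using congrFun heq i

lemma expect_apply_eq_le_inv_card {J α β : Type*} [Fintype J] [DecidableEq J] [DecidableEq β]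
    (F : Finset α) (j : J) {φ : α → β} (hφ : φ.Injective) {ψ : (J → α) → β}
    (hψ : ∀ ω x, ψ (Function.update ω j x) = ψ ω) :
    𝔼 ω ∈ Fintype.piFinset fun _ => F, (if φ (ω j) = ψ ω then 1 else 0 : ℝ) ≤ (F.card : ℝ)⁻¹ := by
  obtain rfl | hF := F.eq_empty_or_nonempty
  · have : Nonempty J := ⟨j⟩
    simp
  · have hcard : (0 : ℝ) < F.card := by exact_mod_cast hF.card_pos
    have hcard' : (0 : ℝ) < (Fintype.piFinset fun _ : J => F).card := by
      exact_mod_cast (Fintype.piFinset_nonempty.mpr fun _ => hF).card_pos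
    rw [Finset.expect_eq_sum_div_card, Finset.sum_boole, div_le_iff₀ hcard',
      inv_mul_eq_div, le_div_iff₀ hcard]
    exact_mod_cast card_filter_apply_eq_mul_card_le F j hφ hψ

/-- The number of index pairs in `P` at which the families `p` and `q` coincide. -/
def collisions {I I' α : Type*} [DecidableEq α] (P : Finset (I × I')) (p : I → α) (q : I' → α) :
    ℕ :=
  (P.filter fun x => p x.1 = q x.2).card

lemma collisions_eq_zero_iff {I I' α : Type*} [DecidableEq α] {P : Finset (I × I')} {p : I → α}
    {q : I' → α} : collisions P p q = 0 ↔ ∀ x ∈ P, p x.1 ≠ q x.2 := by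
  rw [collisions, Finset.card_eq_zero, Finset.filter_eq_empty_iff]

lemma collisions_offDiag_self_eq_zero_iff {I α : Type*} [Fintype I] [DecidableEq α]
    {p : I → α} :
    collisions Finset.univ.offDiag p p = 0 ↔ p.Injective := by
  rw [collisions_eq_zero_iff, Function.injective_iff_pairwise_ne]
  simp [Pairwise]

lemma expect_collisions_le {Ω I I' α : Type*} [DecidableEq α] {s : Finset Ω}
    {P : Finset (I × I')} {p : Ω → I → α} {q : Ω → I' → α} {ε : ℝ}
    (h : ∀ x ∈ P, 𝔼 ω ∈ s, (if p ω x.1 = q ω x.2 then 1 else 0) ≤ ε) :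
    𝔼 ω ∈ s, (collisions P (p ω) (q ω) : ℝ) ≤ P.card * ε := by
  simp only [collisions, Finset.natCast_card_filter]
  rw [Finset.expect_sum_comm, ← nsmul_eq_mul]
  exact Finset.sum_le_card_nsmul P _ ε h

variable {J : Type*} {G : Type*}

/-- The sites occupied by the offsets `b` after translation by the component `ω none` of the
sample `ω`. -/
def translateSites [Mul G] (b : J → G) (ω : Option J → G) (j : J) : G := ω none * b j

/-- The remaining components of the sample `ω`: one independently chosen site per offset. -/
def freeSites (ω : Option J → G) (j : J) : G := ω (some j)

/-- All sites determined by the sample `ω`: the translated offsets and the free sites. -/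
def allSites [Mul G] (b : J → G) (ω : Option J → G) : J ⊕ J → G :=
  Sum.elim (translateSites b ω) (freeSites ω)

variable [DecidableEq G] [Fintype J]

lemma expect_collisions_freeSites_le [DecidableEq J] (F : Finset G) :
    𝔼 ω ∈ Fintype.piFinset fun _ : Option J => F,
        (collisions Finset.univ.offDiag (freeSites ω) (freeSites ω) : ℝ)
      ≤ Fintype.card J ^ 2 / F.card := by
  have hpair : ∀ x ∈ (Finset.univ : Finset J).offDiag,
      𝔼 ω ∈ Fintype.piFinset fun _ : Option J => F,
        (if freeSites ω x.1 = freeSites ω x.2 then 1 else 0 : ℝ) ≤ (F.card : ℝ)⁻¹ := by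
    intro x hx
    have hne : some x.2 ≠ some x.1 := by simpa using (Finset.mem_offDiag.mp hx).2.2.symm
    exact expect_apply_eq_le_inv_card F (some x.1) (φ := id) Function.injective_id
      (ψ := fun ω => ω (some x.2)) fun ω y => Function.update_of_ne hne y ω
  refine (expect_collisions_le hpair).trans ?_
  rw [← div_eq_mul_inv, Finset.offDiag_card, Finset.card_univ, sq]
  gcongr
  exact_mod_cast Nat.sub_le _ _

lemma expect_collisions_allSites_le [Group G] [DecidableEq J] {I : Type*} [Fintype I]
    (b : J → G) (q : I → G) (F : Finset G) :
    𝔼 ω ∈ Fintype.piFinset fun _ : Option J => F,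
        (collisions Finset.univ (allSites b ω) q : ℝ)
      ≤ 2 * Fintype.card J * Fintype.card I / F.card := by
  have hpair : ∀ x : (J ⊕ J) × I, 𝔼 ω ∈ Fintype.piFinset fun _ : Option J => F,
      (if allSites b ω x.1 = q x.2 then 1 else 0 : ℝ)
        ≤ (F.card : ℝ)⁻¹ := by
    rintro ⟨j | j, i⟩
    · exact expect_apply_eq_le_inv_card F none (mul_left_injective (b j)) (ψ := fun _ => q i)
        fun _ _ => rfl
    · exact expect_apply_eq_le_inv_card F (some j) (φ := id) Function.injective_id
        (ψ := fun _ => q i) fun _ _ => rfl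
  refine (expect_collisions_le fun x _ => hpair x).trans_eq ?_
  simp only [Finset.card_univ, Fintype.card_prod, Fintype.card_sum]
  push_cast
  ring

/-- The number of coincidences of sites that obstruct comparing the samples `ω` and `ω'`: within
the free sites of either sample, and between any two sites of different samples. -/
def pairCollisions [Mul G] (b : J → G) (ω ω' : Option J → G) : ℕ :=
  collisions Finset.univ.offDiag (freeSites ω) (freeSites ω) +
    collisions Finset.univ.offDiag (freeSites ω') (freeSites ω') +
    collisions Finset.univ (allSites b ω) (allSites b ω')

lemma pairCollisions_eq_zero_iff [Mul G] {b : J → G} {ω ω' : Option J → G} :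
    pairCollisions b ω ω' = 0 ↔ (freeSites ω).Injective ∧ (freeSites ω').Injective ∧
      ∀ u u', allSites b ω u ≠ allSites b ω' u' := by
  simp only [pairCollisions, Nat.add_eq_zero_iff, collisions_offDiag_self_eq_zero_iff, and_assoc]
  simp only [collisions_eq_zero_iff, Finset.mem_univ, true_imp_iff, Prod.forall]

lemma expect_pairCollisions_le [Group G] [DecidableEq J] (b : J → G) {F : Finset G}
    (hF : F.Nonempty) :
    𝔼 ω ∈ Fintype.piFinset fun _ : Option J => F, 𝔼 ω' ∈ Fintype.piFinset fun _ : Option J => F,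
        (pairCollisions b ω ω' : ℝ) ≤ 6 * Fintype.card J ^ 2 / F.card := by
  have hΩ : (Fintype.piFinset fun _ : Option J => F).Nonempty :=
    Fintype.piFinset_nonempty.mpr fun _ => hF
  have hself := expect_collisions_freeSites_le (J := J) F
  have hcross : 𝔼 ω ∈ Fintype.piFinset fun _ : Option J => F,
      𝔼 ω' ∈ Fintype.piFinset fun _ : Option J => F,
        (collisions Finset.univ (allSites b ω) (allSites b ω') : ℝ)
          ≤ 4 * Fintype.card J ^ 2 / F.card := by
    rw [Finset.expect_comm]
    refine Finset.expect_le hΩ fun ω' _ =>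
      (expect_collisions_allSites_le b (allSites b ω') F).trans_eq ?_
    rw [Fintype.card_sum]
    push_cast
    ring
  simp only [pairCollisions, Nat.cast_add, Finset.expect_add_distrib, Finset.expect_const hΩ]
  linear_combination 2 * hself + hcross

end Sampling

section PatternGap

variable {J : Type*} [Fintype J] {G : Type*}

/-- The difference of the indicators that the pattern `ζ` appears at a translate of the offsets
`b` and at independently chosen sites. -/
def sampleGap [Mul G] (b : J → G) (ζ : J → Bool) (ω : Option J → G) (ξ : G → Bool) : ℝ :=
  cylInd (translateSites b ω) ζ ξ - cylInd (freeSites ω) ζ ξ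

lemma abs_sampleGap_le_one [Mul G] (b : J → G) (ζ : J → Bool) (ω : Option J → G)
    (ξ : G → Bool) : |sampleGap b ζ ω ξ| ≤ 1 :=
  abs_sub_le_of_nonneg_of_le (cylInd_nonneg _ _ _) (cylInd_le_one _ _ _) (cylInd_nonneg _ _ _)
    (cylInd_le_one _ _ _)

/-- The particle density of `ξ` in `F`. -/
noncomputable def density (F : Finset G) (ξ : G → Bool) : ℝ := 𝔼 σ ∈ F, if ξ σ then 1 else 0

lemma bw_density {F : Finset G} (hF : F.Nonempty) (ξ : G → Bool) (a : Bool) :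
    bw (density F ξ) a = 𝔼 σ ∈ F, if ξ σ = a then 1 else 0 := by
  cases a with
  | true => rfl
  | false =>
    rw [bw, density, if_neg Bool.false_ne_true, sub_eq_iff_eq_add, ← Finset.expect_add_distrib]
    have hone : ∀ σ, (if ξ σ = false then 1 else 0 : ℝ) + (if ξ σ then 1 else 0) = 1 :=
      fun σ => by cases ξ σ <;> simp
    simp only [hone, Finset.expect_const hF]

/-- The frequency of the pattern `ζ` among the translates by `F` of the offsets `b`, minus its
probability under the Bernoulli product measure with the empirical density of `F`. -/
noncomputable def patternGap [Mul G] (b : J → G) (F : Finset G) (ζ : J → Bool)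
    (ξ : G → Bool) : ℝ :=
  𝔼 σ ∈ F, cylInd (fun j => σ * b j) ζ ξ - ∏ j, bw (density F ξ) (ζ j)

lemma patternGap_eq_expect [Mul G] [DecidableEq J] (b : J → G) {F : Finset G} (hF : F.Nonempty)
    (ζ : J → Bool) (ξ : G → Bool) :
    patternGap b F ζ ξ =
      𝔼 ω ∈ Fintype.piFinset fun _ : Option J => F, sampleGap b ζ ω ξ := by
  have htranslate : 𝔼 ω ∈ Fintype.piFinset fun _ : Option J => F,
      cylInd (fun j => ω none * b j) ζ ξ = 𝔼 σ ∈ F, cylInd (fun j => σ * b j) ζ ξ := by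
    have h := expect_piFinset_prod (fun _ : Option J => F) fun i σ =>
      i.elim (cylInd (fun j => σ * b j) ζ ξ) fun _ => 1
    simpa [Fintype.prod_option, Finset.expect_const hF] using h
  have hfree : 𝔼 ω ∈ Fintype.piFinset fun _ : Option J => F,
      cylInd (fun j => ω (some j)) ζ ξ = ∏ j, bw (density F ξ) (ζ j) := by
    have h := expect_piFinset_prod (fun _ : Option J => F) fun i σ =>
      i.elim (1 : ℝ) fun j => if ξ σ = ζ j then 1 else 0
    simpa [Fintype.prod_option, Finset.expect_const hF, cylInd_eq_prod, bw_density hF] using h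
  rw [patternGap, ← htranslate, ← hfree, ← Finset.expect_sub_distrib]
  rfl

end PatternGap

section SecondMoment

variable {G : Type} [Group G]

section Expectation

variable {N : Subgroup G} [Fintype (G ⧸ N)] [DecidableEq (G ⧸ N)] {μ : Conf N → ℝ}

lemma IsProb.abs_Emeas_le (hμ : IsProb N μ) {g : Conf N → ℝ} {B : ℝ} (hg : ∀ η, |g η| ≤ B) :
    |Emeas N μ g| ≤ B := by
  calc |Emeas N μ g| ≤ ∑ η, |μ η * g η| := Finset.abs_sum_le_sum_abs _ _
    _ ≤ ∑ η, μ η * B := by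
        gcongr with η
        rw [abs_mul, abs_of_nonneg (hμ.1 η)]
        exact mul_le_mul_of_nonneg_left (hg η) (hμ.1 η)
    _ = B := by rw [← Finset.sum_mul, hμ.2, one_mul]

lemma IsProb.Emeas_abs_le_sqrt (hμ : IsProb N μ) (g : Conf N → ℝ) :
    Emeas N μ (fun η => |g η|) ≤ √(Emeas N μ fun η => g η ^ 2) := by
  refine Real.le_sqrt_of_sq_le ?_
  simpa only [Emeas, sq_abs] using Real.pow_arith_mean_le_arith_mean_pow Finset.univ μ
    (fun η => |g η|) (fun η _ => hμ.1 η) hμ.2 (fun η _ => abs_nonneg _) 2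

lemma Emeas_expect {ι : Type*} (s : Finset ι) (g : ι → Conf N → ℝ) :
    Emeas N μ (fun η => 𝔼 i ∈ s, g i η) = 𝔼 i ∈ s, Emeas N μ (g i) := by
  simp only [Emeas, Finset.mul_expect, Finset.expect_sum_comm]

end Expectation

variable {κ : Type*} {l : Filter κ} {N : κ → Subgroup G} [∀ k, Fintype (G ⧸ N k)]
  [∀ k, DecidableEq (G ⧸ N k)] {μ : ∀ k, Conf (N k) → ℝ} {J : Type} [Fintype J] {b : J → G}

lemma IsAsympExchangeable.tendsto_Emeas_sampleGap_mul (hμ : IsAsympExchangeable l N μ)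
    (hb : b.Injective) {ω ω' : Option J → G} (hω : (freeSites ω).Injective)
    (hω' : (freeSites ω').Injective)
    (hne : ∀ u u', allSites b ω u ≠ allSites b ω' u') (ζ : J → Bool) :
    Tendsto (fun k => Emeas (N k) (μ k) fun η =>
      sampleGap b ζ ω (liftZ (N k) η) * sampleGap b ζ ω' (liftZ (N k) η)) l (nhds 0) := by
  have ht : ∀ τ : Option J → G, (translateSites b τ).Injective :=
    fun τ => (mul_right_injective (τ none)).comp hb
  have htt := (ht ω).sumElim (ht ω') fun i j => hne (.inl i) (.inl j)
  have htf := (ht ω).sumElim hω' fun i j => hne (.inl i) (.inr j)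
  have hft := hω.sumElim (ht ω') fun i j => hne (.inr i) (.inl j)
  have hff := hω.sumElim hω' fun i j => hne (.inr i) (.inr j)
  have hlim := (hμ htt htf (Sum.elim ζ ζ)).add (hμ hff hft (Sum.elim ζ ζ))
  rw [add_zero] at hlim
  refine hlim.congr fun k => ?_
  simp only [cylProb, Emeas, cylInd_sumElim, ← Finset.sum_sub_distrib, ← Finset.sum_add_distrib]
  exact Finset.sum_congr rfl fun η _ => by rw [sampleGap, sampleGap]; ring

lemma IsAsympExchangeable.eventually_abs_Emeas_sampleGap_mul_le [DecidableEq G]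
    (hμ : IsAsympExchangeable l N μ) (hprob : ∀ k, IsProb (N k) (μ k)) (hb : b.Injective)
    (ζ : J → Bool) {ε : ℝ} (hε : 0 < ε) (ω ω' : Option J → G) :
    ∀ᶠ k in l, |Emeas (N k) (μ k) fun η =>
        sampleGap b ζ ω (liftZ (N k) η) * sampleGap b ζ ω' (liftZ (N k) η)| ≤
      ε + pairCollisions b ω ω' := by
  obtain hzero | hpos := (pairCollisions b ω ω').eq_zero_or_pos
  · obtain ⟨hω, hω', hne⟩ := pairCollisions_eq_zero_iff.mp hzero
    have hlim := (hμ.tendsto_Emeas_sampleGap_mul hb hω hω' hne ζ).abs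
    rw [abs_zero] at hlim
    filter_upwards [hlim.eventually_le_const hε] with k hk
    simpa [hzero] using hk
  · refine .of_forall fun k => ((hprob k).abs_Emeas_le fun η => ?_).trans
      (?_ : (1 : ℝ) ≤ ε + pairCollisions b ω ω')
    · rw [abs_mul]
      exact mul_le_one₀ (abs_sampleGap_le_one _ _ _ _) (abs_nonneg _)
        (abs_sampleGap_le_one _ _ _ _)
    · have : (1 : ℝ) ≤ pairCollisions b ω ω' := by exact_mod_cast hpos
      linarith

lemma Emeas_patternGap_sq [DecidableEq J] {H : Subgroup G} [Fintype (G ⧸ H)]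
    [DecidableEq (G ⧸ H)] (ν : Conf H → ℝ) (b : J → G) {F : Finset G} (hF : F.Nonempty)
    (ζ : J → Bool) :
    Emeas H ν (fun η => patternGap b F ζ (liftZ H η) ^ 2) =
      𝔼 ω ∈ Fintype.piFinset fun _ => F, 𝔼 ω' ∈ Fintype.piFinset fun _ => F,
        Emeas H ν fun η => sampleGap b ζ ω (liftZ H η) * sampleGap b ζ ω' (liftZ H η) := by
  simp only [patternGap_eq_expect b hF, sq, Finset.expect_mul_expect, Emeas_expect]

lemma IsAsympExchangeable.eventually_Emeas_patternGap_sq_le (hμ : IsAsympExchangeable l N μ)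
    (hprob : ∀ k, IsProb (N k) (μ k)) (hb : b.Injective) {F : Finset G} (hF : F.Nonempty)
    (ζ : J → Bool) {ε : ℝ} (hε : 0 < ε) :
    ∀ᶠ k in l, Emeas (N k) (μ k) (fun η => patternGap b F ζ (liftZ (N k) η) ^ 2) ≤
      ε + 6 * Fintype.card J ^ 2 / F.card := by
  classical
  set Ω := Fintype.piFinset fun _ : Option J => F
  have hΩ : Ω.Nonempty := Fintype.piFinset_nonempty.mpr fun _ => hF
  have hpairs : ∀ᶠ k in l, ∀ ω ∈ Ω, ∀ ω' ∈ Ω, _ :=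
    (eventually_all_finset Ω).mpr fun ω _ => (eventually_all_finset Ω).mpr fun ω' _ =>
      hμ.eventually_abs_Emeas_sampleGap_mul_le hprob hb ζ hε ω ω'
  filter_upwards [hpairs] with k hk
  calc Emeas (N k) (μ k) (fun η => patternGap b F ζ (liftZ (N k) η) ^ 2)
      ≤ 𝔼 ω ∈ Ω, 𝔼 ω' ∈ Ω, (ε + pairCollisions b ω ω') := by
        rw [Emeas_patternGap_sq (μ k) b hF]
        exact Finset.expect_le_expect fun ω hω => Finset.expect_le_expect fun ω' hω' =>
          (le_abs_self _).trans (hk ω hω ω' hω')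
    _ ≤ ε + 6 * Fintype.card J ^ 2 / F.card := by
        simp only [Finset.expect_add_distrib, Finset.expect_const hΩ]
        gcongr
        exact expect_pairCollisions_le b hF

end SecondMoment

section LocalFunction

variable {S : Finset Γ} (f : LocalBundleV S)

/-- The value of `f_o` on the configurations that show the pattern `ζ` on the ball on which
`f_o` depends. -/
def LocalBundleV.onPattern (ζ : {a // a ∈ ballF S f.r} → Bool) : ℝ :=
  f.f 1 fun z => if h : z ∈ ballF S f.r then ζ ⟨z, h⟩ else false

lemma LocalBundleV.f_one_eq_sum (ξ : Γ → Bool) :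
    f.f 1 ξ = ∑ ζ, cylInd Subtype.val ζ ξ * f.onPattern ζ := by
  have hloc : f.f 1 ξ = f.onPattern (ξ ∘ Subtype.val) :=
    f.localized 1 _ _ fun z hz => by
      have hz' : z ∈ ballF S f.r := by simpa using hz
      simp [hz']
  simp [hloc, cylInd]

variable (N : Subgroup Γ) [N.Normal]

lemma fQ_mk (σ : Γ) (η : Conf N) :
    fQ N f (QuotientGroup.mk σ) η = f.f 1 fun z => liftZ N η (σ * z) := by
  set x := (QuotientGroup.mk σ : Γ ⧸ N).out
  have hx : (QuotientGroup.mk x : Γ ⧸ N) = QuotientGroup.mk σ := QuotientGroup.out_eq' _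
  have hshift : (fun z => liftZ N η (σ * z)) = fun z => liftZ N η (x⁻¹⁻¹ * z) := by
    simp only [liftZ, inv_inv, QuotientGroup.mk_mul, hx]
  rw [fQ, hshift, ← inv_mul_cancel x, f.invariant]

lemma etabarQ_one_eq_density {G : Type} [Group G] (H : Subgroup G) [H.Normal] (F : Finset G)
    (η : Conf H) : etabarQ H F 1 η = density F (liftZ H η) := by
  simp only [etabarQ, density, mul_one, Finset.expect_eq_sum_div_card, inv_mul_eq_div]
  rfl

lemma fbarQ_one_eq_sum (F : Finset Γ) (η : Conf N) :
    fbarQ N f F 1 η = ∑ ζ,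
      (𝔼 σ ∈ F, cylInd (fun j : {a // a ∈ ballF S f.r} => σ * j) ζ (liftZ N η)) *
        f.onPattern ζ := by
  simp only [Finset.expect_mul, ← Finset.expect_sum_comm]
  simp only [fbarQ, mul_one, fQ_mk, f.f_one_eq_sum, Finset.expect_eq_sum_div_card, inv_mul_eq_div]
  rfl

lemma fbarQ_one_sub_globalAvg (F : Finset Γ) (η : Conf N) :
    fbarQ N f F 1 η - globalAvg f (etabarQ N F 1 η) =
      ∑ ζ, patternGap Subtype.val F ζ (liftZ N η) * f.onPattern ζ := by
  simp only [patternGap, sub_mul, Finset.sum_sub_distrib, fbarQ_one_eq_sum,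
    etabarQ_one_eq_density]
  rfl

end LocalFunction

section OneBlock

lemma IsProb.Emeas_abs_sum_mul_le {G : Type} [Group G] {N : Subgroup G} [Fintype (G ⧸ N)]
    [DecidableEq (G ⧸ N)] {μ : Conf N → ℝ} (hμ : IsProb N μ) {ι : Type*} (s : Finset ι)
    {g : ι → Conf N → ℝ} {B : ℝ} (hg : ∀ i ∈ s, Emeas N μ (fun η => g i η ^ 2) ≤ B)
    (a : ι → ℝ) :
    Emeas N μ (fun η => |∑ i ∈ s, g i η * a i|) ≤ √B * ∑ i ∈ s, |a i| := by
  calc Emeas N μ (fun η => |∑ i ∈ s, g i η * a i|)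
      ≤ ∑ η, μ η * ∑ i ∈ s, |g i η| * |a i| := by
        refine Finset.sum_le_sum fun η _ => mul_le_mul_of_nonneg_left ?_ (hμ.1 η)
        simpa only [abs_mul] using Finset.abs_sum_le_sum_abs (fun i => g i η * a i) s
    _ = ∑ i ∈ s, Emeas N μ (fun η => |g i η|) * |a i| := by
        simp only [Emeas, Finset.mul_sum, Finset.sum_mul, mul_assoc]
        exact Finset.sum_comm
    _ ≤ √B * ∑ i ∈ s, |a i| := by
        rw [Finset.mul_sum]
        refine Finset.sum_le_sum fun i hi => mul_le_mul_of_nonneg_right ?_ (abs_nonneg _)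
        exact (hμ.Emeas_abs_le_sqrt _).trans (Real.sqrt_le_sqrt (hg i hi))

variable {κ : Type*} {l : Filter κ} {N : κ → Subgroup Γ} [∀ k, (N k).Normal]
  [∀ k, Fintype (Γ ⧸ N k)] [∀ k, DecidableEq (Γ ⧸ N k)] {μ : ∀ k, Conf (N k) → ℝ}
  {S : Finset Γ}

lemma IsAsympExchangeable.exists_eventually_Emeas_abs_le (hμ : IsAsympExchangeable l N μ)
    (hprob : ∀ k, IsProb (N k) (μ k)) (f : LocalBundleV S) :
    ∃ K, ∀ F : Finset Γ, F.Nonempty → ∀ᶠ k in l, Emeas (N k) (μ k) (fun η =>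
      |fbarQ (N k) f F 1 η - globalAvg f (etabarQ (N k) F 1 η)|) ≤ K / √F.card := by
  set J := {a // a ∈ ballF S f.r}
  set B : ℝ := 1 + 6 * Fintype.card J ^ 2
  refine ⟨√B * ∑ ζ, |f.onPattern ζ|, fun F hF => ?_⟩
  have hcard : (0 : ℝ) < F.card := by exact_mod_cast hF.card_pos
  have hgap : ∀ᶠ k in l, ∀ ζ : J → Bool, _ := eventually_all.mpr fun ζ =>
    hμ.eventually_Emeas_patternGap_sq_le hprob Subtype.val_injective hF ζ (inv_pos.mpr hcard)
  filter_upwards [hgap] with k hk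
  have hle := (hprob k).Emeas_abs_sum_mul_le Finset.univ (fun ζ _ => hk ζ) f.onPattern
  have hsplit : (F.card : ℝ)⁻¹ + 6 * Fintype.card J ^ 2 / F.card = B / F.card := by
    simp only [B]; ring
  rw [hsplit, Real.sqrt_div' _ hcard.le, div_mul_eq_mul_div] at hle
  simpa only [fbarQ_one_sub_globalAvg] using hle

end OneBlock

section Uniform

/-- The set `P_{m,C}` of the theorem, with `E` in place of `C [Γ : Γ_m] / t_m`. -/
def lowEnergyMeasures (N : Subgroup Γ) [N.Normal] [Fintype (Γ ⧸ N)] [DecidableEq (Γ ⧸ N)]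
    {S : Finset Γ} (c : JumpRate S) (E : ℝ) : Set (Conf N → ℝ) :=
  {μ | IsProb N μ ∧ IsInvariant N μ ∧ ImGen N c μ ≤ E}

lemma exists_eventually_forall_Emeas_abs_le {κ : Type*} {l : Filter κ} {N : κ → Subgroup Γ}
    [∀ k, (N k).Normal] [∀ k, Fintype (Γ ⧸ N k)] [∀ k, DecidableEq (Γ ⧸ N k)] {S : Finset Γ}
    (hS : Subgroup.closure (S : Set Γ) = ⊤) (hsep : ∀ x ≠ 1, ∀ᶠ k in l, x ∉ N k) {δ : κ → ℝ}
    (hδ : Tendsto δ l (nhds 0)) (c : JumpRate S) (f : LocalBundleV S) :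
    ∃ K, ∀ F : Finset Γ, F.Nonempty → ∀ᶠ k in l,
      ∀ μ ∈ lowEnergyMeasures (N k) c (δ k * (N k).index), Emeas (N k) μ (fun η =>
        |fbarQ (N k) f F 1 η - globalAvg f (etabarQ (N k) F 1 η)|) ≤ K / √F.card := by
  -- Indexing the net by the measures themselves makes the estimates uniform over them.
  let κ' := Σ k, lowEnergyMeasures (N k) c (δ k * (N k).index)
  let l' : Filter κ' := l.comap Sigma.fst
  have hsep' : ∀ x ≠ 1, ∀ᶠ y : κ' in l', x ∉ N y.1 := fun x hx => (hsep x hx).comap _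
  have hTV := tendsto_sum_abs_exchQ_sub hsep' (fun y => y.2.2.1) (fun y => y.2.2.2.1)
    (hδ.comp tendsto_comap) (fun y => y.2.2.2.2)
  have hexch := isAsympExchangeable_of_tendsto hS hsep' fun a s hs => hTV a ⟨s, hs⟩
  obtain ⟨K, hK⟩ := hexch.exists_eventually_Emeas_abs_le (fun y => y.2.2.1) f
  refine ⟨K, fun F hF => ?_⟩
  filter_upwards [eventually_comap.mp (hK F hF)] with k hk μ hμ
  exact hk ⟨k, μ, hμ⟩ rfl

lemma tendsto_limsup_sSup_zero {ι α : Type*} {l : Filter ι} {l' : Filter α} [l'.NeBot]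
    {A : ι → α → Set ℝ} {B : ι → ℝ} (hA : ∀ i a, ∀ x ∈ A i a, 0 ≤ x)
    (hAB : ∀ᶠ i in l, ∀ᶠ a in l', ∀ x ∈ A i a, x ≤ B i) (hB : Tendsto B l (nhds 0)) :
    Tendsto (fun i => limsup (fun a => sSup (A i a)) l') l (nhds 0) := by
  have hnonneg : ∀ i a, 0 ≤ sSup (A i a) := fun i a => Real.sSup_nonneg (hA i a)
  have hle : ∀ᶠ i in l, ∀ᶠ a in l', sSup (A i a) ≤ |B i| := by
    filter_upwards [hAB] with i hi
    filter_upwards [hi] with a ha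
    exact Real.sSup_le (fun x hx => (ha x hx).trans (le_abs_self _)) (abs_nonneg _)
  refine squeeze_zero' ?_ ?_ (by simpa using hB.abs) <;> filter_upwards [hle] with i hi
  · exact le_limsup_of_frequently_le (.of_forall (hnonneg i)) ⟨_, eventually_map.mpr hi⟩
  · exact limsup_le_of_le (isCoboundedUnder_le_of_le l' (hnonneg i)) hi

end Uniform

section Folner

lemma eq_univ_of_mul_subset {G : Type*} [Group G] [DecidableEq G] {S F : Finset G}
    (hS : Subgroup.closure (S : Set G) = ⊤) (hF : F.Nonempty) (hFS : F * S ⊆ F) :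
    (F : Set G) = Set.univ := by
  have mul_mem_iff : ∀ s ∈ S, ∀ x, x * s ∈ F ↔ x ∈ F := by
    intro s hs x
    have himage : F.image (· * s) = F := Finset.eq_of_subset_of_card_le
      (Finset.image_subset_iff.mpr fun x hx => hFS (Finset.mul_mem_mul hx hs))
      (Finset.card_image_of_injective F (mul_left_injective s)).ge
    nth_rewrite 1 [← himage]
    simp
  obtain ⟨x, hx⟩ := hF
  have mul_mem : ∀ g ∈ Subgroup.closure (S : Set G), x * g ∈ F := by
    intro g hg
    induction hg using Subgroup.closure_induction_right with
    | one => rwa [mul_one]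
    | mul_right y _ s hs ih => rwa [← mul_assoc, mul_mem_iff s hs]
    | mul_inv_cancel y _ s hs ih => rwa [← mul_mem_iff s hs, ← mul_assoc, inv_mul_cancel_right]
  refine Set.eq_univ_of_forall fun g => ?_
  simpa using mul_mem (x⁻¹ * g) (hS ▸ Subgroup.mem_top _)

lemma IsFolner.tendsto_card_atTop [Infinite Γ] {S : Finset Γ}
    (hS : Subgroup.closure (S : Set Γ) = ⊤) {F : ℕ → Finset Γ} (hF : IsFolner S F) :
    Tendsto (fun i => (F i).card) atTop atTop := by
  have hboundary : ∀ i, 1 ≤ ((F i * S) \ F i).card := fun i => by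
    rw [Nat.one_le_iff_ne_zero, Finset.card_ne_zero, Finset.sdiff_nonempty]
    intro hsub
    exact Set.infinite_univ (eq_univ_of_mul_subset hS (hF.1 i) hsub ▸ (F i).finite_toSet)
  have hcard : ∀ i, (0 : ℝ) < (F i).card := fun i => by exact_mod_cast (hF.1 i).card_pos
  have hinv : Tendsto (fun i => ((F i).card : ℝ)⁻¹) atTop (nhds 0) := by
    refine squeeze_zero (fun i => (inv_pos.mpr (hcard i)).le) (fun i => ?_) hF.2
    rw [inv_eq_one_div]
    gcongr
    exact_mod_cast hboundary i
  rw [← tendsto_natCast_atTop_iff (R := ℝ)]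
  exact ((tendsto_nhdsWithin_iff.mpr
    ⟨hinv, .of_forall fun i => inv_pos.mpr (hcard i)⟩).inv_tendsto_nhdsGT_zero).congr
      fun i => inv_inv _

lemma eventually_notMem_of_antitone {G : Type*} [Group G] {Γs : ℕ → Subgroup G}
    (hdesc : ∀ m, Γs (m + 1) ≤ Γs m) (hsep : ∀ x : G, (∀ m, x ∈ Γs m) → x = 1) :
    ∀ x ≠ 1, ∀ᶠ m in atTop, x ∉ Γs m := by
  intro x hx
  obtain ⟨n, hn⟩ := not_forall.mp (mt (hsep x) hx)
  filter_upwards [eventually_ge_atTop n] with m hm hmem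
  exact hn (antitone_nat_of_succ_le hdesc hm hmem)

end Folner

theorem one_block_estimate_general (S : Finset Γ) (hS_gen : Subgroup.closure (S : Set Γ) = ⊤)
    (Γs : ℕ → Subgroup Γ) [∀ m, (Γs m).Normal]
    [∀ m, Fintype (Γ ⧸ Γs m)] [∀ m, DecidableEq (Γ ⧸ Γs m)]
    (hsep : ∀ x ≠ 1, ∀ᶠ m in atTop, x ∉ Γs m)
    (t : ℕ → ℝ) (ht_top : Tendsto t atTop atTop)
    (F : ℕ → Finset Γ) (hF : Tendsto (fun i => (F i).card) atTop atTop)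
    (c : JumpRate S) (f : LocalBundleV S) (C : ℝ) :
    Tendsto (fun i : ℕ =>
        limsup (fun m : ℕ =>
            sSup {x : ℝ | ∃ μ : Conf (Γs m) → ℝ,
              IsProb (Γs m) μ ∧ IsInvariant (Γs m) μ ∧
                ImGen (Γs m) c μ ≤ C * ((Γs m).index : ℝ) / t m ∧
                x = Emeas (Γs m) μ (fun η =>
                  |fbarQ (Γs m) f (F i) 1 η -
                    globalAvg f (etabarQ (Γs m) (F i) 1 η)|)})
          atTop)
      atTop (nhds 0) := by
  have hδ : Tendsto (fun m => C / t m) atTop (nhds 0) := tendsto_const_nhds.div_atTop ht_top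
  obtain ⟨K, hK⟩ := exists_eventually_forall_Emeas_abs_le hS_gen hsep hδ c f
  have hrate : Tendsto (fun i => K / √(F i).card) atTop (nhds 0) :=
    tendsto_const_nhds.div_atTop
      (Real.tendsto_sqrt_atTop.comp (tendsto_natCast_atTop_atTop.comp hF))
  refine tendsto_limsup_sSup_zero ?_ ?_ hrate
  · rintro i m _ ⟨μ, hμ, -, -, rfl⟩
    exact Finset.sum_nonneg fun η _ => mul_nonneg (hμ.1 η) (abs_nonneg _)
  · filter_upwards [hF.eventually_ge_atTop 1] with i hi
    filter_upwards [hK (F i) (Finset.card_pos.mp hi)] with m hm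
    rintro _ ⟨μ, hprob, hinv, hI, rfl⟩
    exact hm μ ⟨hprob, hinv, hI.trans_eq (div_mul_eq_mul_div C (t m) _).symm⟩

/-- **Theorem 3.2 (the one-block estimate).**
For every jump rate `c`, every `Γ`-invariant local function bundle `f` and every `C > 0`,
`lim_{i→∞} limsup_{m→∞} sup_{μ ∈ P_{m,C}} E_μ |f̄_{o,i} - ⟨f_o⟩(η̄_{o,i})| = 0`. -/
theorem one_block_estimate
    {Γ : Type} [Group Γ] [DecidableEq Γ] [Infinite Γ]
    (S : Finset Γ) (hS_symm : ∀ s ∈ S, s⁻¹ ∈ S)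
    (hS_gen : Subgroup.closure (S : Set Γ) = ⊤)
    (Γs : ℕ → Subgroup Γ) [∀ m, (Γs m).Normal] [∀ m, (Γs m).FiniteIndex]
    [∀ m, Fintype (Γ ⧸ Γs m)] [∀ m, DecidableEq (Γ ⧸ Γs m)]
    (hdesc : ∀ m, Γs (m + 1) ≤ Γs m)
    (hsep : ∀ x : Γ, (∀ m, x ∈ Γs m) → x = 1)
    (t : ℕ → ℝ) (ht_pos : ∀ m, 0 < t m) (ht_mono : StrictMono t)
    (ht_top : Tendsto t atTop atTop)
    (ht_diam : ∀ m, Real.sqrt (t m) ≤ 2 * (diamQ (Γs m) S : ℝ))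
    (F : ℕ → Finset Γ) (hF : IsFolner S F)
    (c : JumpRate S) (f : LocalBundleV S) (C : ℝ) (hC : 0 < C) :
    Tendsto (fun i : ℕ =>
        limsup (fun m : ℕ =>
            sSup {x : ℝ | ∃ μ : Conf (Γs m) → ℝ,
              IsProb (Γs m) μ ∧ IsInvariant (Γs m) μ ∧
                ImGen (Γs m) c μ ≤ C * ((Γs m).index : ℝ) / t m ∧
                x = Emeas (Γs m) μ (fun η =>
                  |fbarQ (Γs m) f (F i) 1 η -
                    globalAvg f (etabarQ (Γs m) (F i) 1 η)|)})
          atTop)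
      atTop (nhds 0) := by
  exact one_block_estimate_general S hS_gen Γs (eventually_notMem_of_antitone hdesc hsep) t ht_top F
    (hF.tendsto_card_atTop hS_gen) c f C

end Tower
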